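/- (Nussbaum convexity) Let C ⊆ ℝ be a nonempty convex set, and let F, G : C → ℝ^{N×N} with F(s) entrywise nonnegative for each s, each entry of F either log-convex or identically zero, G(s) diagonal for each s, and each diagonal entry of G convex. Then s ↦ ζ(F(s) + G(s)) is a convex function on C, where ζ denotes the spectral abscissa. -/

import Mathlib

open Matrix

/-- The spectral abscissa of a real square matrix. -/
noncomputable def specAbs {n : Type*} [Fintype n] [DecidableEq n]
    (A : Matrix n n ℝ) : ℝ :=
  sSup (Complex.re '' spectrum ℂ (A.map (algebraMap ℝ ℂ)))

/-!
For a matrix `A` with nonnegative off-diagonal entries, the spectral abscissa is the infimum over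
`x : n → ℝ` of the largest row sum `max i, ∑ j, A i j * exp (x j - x i)` of the matrix obtained from
`A` by conjugation with `diagonal (exp x)`. Gershgorin's theorem gives `≤`. For `≥`, if `l` exceeds
the spectral abscissa then `v = (l - A)⁻¹ 1` is a positive vector with `A v ≤ l v`, so `x = log v`
has all row sums at most `l`; positivity of `v` holds for large `l` by a minimum principle and
propagates to all such `l` by connectedness. If the off-diagonal entries of `A` are log-convex or
zero and its diagonal entries are convex in `s`, then each row sum is jointly convex in `(s, x)`,
and minimizing over `x` preserves convexity.
-/

lemma convexOn_finsetSum {𝕜 E β ι : Type*} [Semiring 𝕜] [PartialOrder 𝕜] [AddCommMonoid E]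
    [SMul 𝕜 E] [AddCommMonoid β] [PartialOrder β] [IsOrderedAddMonoid β] [Module 𝕜 β]
    {C : Set E} {t : Finset ι} {F : ι → E → β} (hC : Convex 𝕜 C)
    (hF : ∀ i ∈ t, ConvexOn 𝕜 C (F i)) : ConvexOn 𝕜 C fun s => ∑ i ∈ t, F i s := by
  simp only [← Finset.sum_apply]
  exact Finset.sum_induction F (ConvexOn 𝕜 C) (fun _ _ => ConvexOn.add) (convexOn_const 0 hC) hF

section Convexity

variable {E V : Type*} [AddCommMonoid E] [Module ℝ E] [AddCommMonoid V] [Module ℝ V] {C : Set E}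
  {f g : E → ℝ}

/-- `f` is log-convex on `C` or vanishes identically there, the condition imposed on off-diagonal
matrix entries. Positivity is part of log-convexity, since `Real.log 0 = 0`. -/
def LogConvexOrZeroOn (C : Set E) (f : E → ℝ) : Prop :=
  ((∀ s ∈ C, 0 < f s) ∧ ConvexOn ℝ C fun s => Real.log (f s)) ∨ ∀ s ∈ C, f s = 0

namespace LogConvexOrZeroOn

lemma nonneg (hf : LogConvexOrZeroOn C f) {s : E} (hs : s ∈ C) : 0 ≤ f s :=
  hf.elim (fun h => (h.1 s hs).le) fun h => (h s hs).ge

lemma congr (hf : LogConvexOrZeroOn C f) (hfg : Set.EqOn f g C) : LogConvexOrZeroOn C g := by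
  refine hf.imp (fun ⟨hpos, hlog⟩ => ⟨fun s hs => hfg hs ▸ hpos s hs, hlog.congr fun s hs => ?_⟩)
    fun hzero s hs => hfg hs ▸ hzero s hs
  simp only [hfg hs]

lemma comp_linearMap (hf : LogConvexOrZeroOn C f) (φ : V →ₗ[ℝ] E) :
    LogConvexOrZeroOn (φ ⁻¹' C) (f ∘ φ) :=
  hf.imp (fun ⟨hpos, hlog⟩ => ⟨fun v hv => hpos (φ v) hv, hlog.comp_linearMap φ⟩)
    fun hzero v hv => hzero (φ v) hv

lemma mul_exp (hf : LogConvexOrZeroOn C f) (hg : ConvexOn ℝ C g) :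
    LogConvexOrZeroOn C fun s => f s * Real.exp (g s) := by
  refine hf.imp (fun ⟨hpos, hlog⟩ => ⟨fun s hs => mul_pos (hpos s hs) (Real.exp_pos _),
    (hlog.add hg).congr fun s hs => ?_⟩) fun hzero s hs => mul_eq_zero_of_left (hzero s hs) _
  simp only [Pi.add_apply, Real.log_mul (hpos s hs).ne' (Real.exp_pos _).ne', Real.log_exp]

lemma convexOn (hf : LogConvexOrZeroOn C f) (hC : Convex ℝ C) : ConvexOn ℝ C f := by
  rcases hf with ⟨hpos, hlog⟩ | hzero
  · have hexp : ConvexOn ℝ C fun s => Real.exp (Real.log (f s)) :=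
      ⟨hC, fun s hs t ht a b ha hb hab => (Real.exp_le_exp.2 (hlog.2 hs ht ha hb hab)).trans
        (convexOn_exp.2 (Set.mem_univ _) (Set.mem_univ _) ha hb hab)⟩
    exact hexp.congr fun s hs => Real.exp_log (hpos s hs)
  · exact (convexOn_const 0 hC).congr fun s hs => (hzero s hs).symm

end LogConvexOrZeroOn

-- `φ s` plays the role of `⨅ v, ⨆ i, Φ i (s, v)`.
lemma convexOn_of_partial_minimization {ι : Type*} {Φ : ι → E × V → ℝ} {φ : E → ℝ}
    (hC : Convex ℝ C) (hΦ : ∀ i, ConvexOn ℝ (Prod.fst ⁻¹' C) (Φ i))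
    (hle : ∀ s ∈ C, ∀ v l, (∀ i, Φ i (s, v) ≤ l) → φ s ≤ l)
    (hlt : ∀ s ∈ C, ∀ l, φ s < l → ∃ v, ∀ i, Φ i (s, v) ≤ l) : ConvexOn ℝ C φ := by
  refine ⟨hC, fun s hs t ht a b ha hb hab => le_of_forall_pos_le_add fun ε hε => ?_⟩
  obtain ⟨v, hv⟩ := hlt s hs (φ s + ε) (lt_add_of_pos_right _ hε)
  obtain ⟨w, hw⟩ := hlt t ht (φ t + ε) (lt_add_of_pos_right _ hε)
  refine hle _ (hC hs ht ha hb hab) (a • v + b • w) _ fun i => ?_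
  calc Φ i (a • s + b • t, a • v + b • w)
      ≤ a • Φ i (s, v) + b • Φ i (t, w) :=
        (hΦ i).2 (x := (s, v)) hs (y := (t, w)) ht ha hb hab
    _ ≤ a • (φ s + ε) + b • (φ t + ε) := by gcongr; exacts [hv i, hw i]
    _ = a • φ s + b • φ t + ε := by
        rw [smul_add, smul_add, add_add_add_comm, ← add_smul, hab, one_smul]

end Convexity

/-- A Metzler matrix: a square matrix whose off-diagonal entries are nonnegative. For these
matrices the spectral abscissa is governed by row sums. -/
def IsMetzler {n R : Type*} [Zero R] [LE R] (A : Matrix n n R) : Prop :=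
  ∀ i j, i ≠ j → 0 ≤ A i j

namespace IsMetzler

variable {n R : Type*} [Fintype n] [Ring R] [LinearOrder R] [IsStrictOrderedRing R]
  {A : Matrix n n R} {l : R} {v : n → R}

lemma apply_mul_le_mulVec (hA : IsMetzler A) {i : n} (hv : ∀ j, i ≠ j → 0 ≤ v j) :
    A i i * v i ≤ (A *ᵥ v) i := by
  classical
  rw [mulVec, dotProduct, ← Finset.add_sum_erase _ _ (Finset.mem_univ i)]
  refine le_add_of_nonneg_right (Finset.sum_nonneg fun j hj => ?_)
  have hij : i ≠ j := (Finset.ne_of_mem_erase hj).symm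
  exact mul_nonneg (hA i j hij) (hv j hij)

lemma pos_of_nonneg_of_mulVec_lt (hA : IsMetzler A) (hlt : ∀ i, (A *ᵥ v) i < l * v i)
    (hv : ∀ i, 0 ≤ v i) (i : n) : 0 < v i := by
  refine (hv i).lt_of_ne' fun hzero => ?_
  have hrow := (hA.apply_mul_le_mulVec fun j _ => hv j).trans_lt (hlt i)
  simp only [hzero, mul_zero, lt_self_iff_false] at hrow

lemma pos_of_sum_le_of_mulVec_lt (hA : IsMetzler A) (hlt : ∀ i, (A *ᵥ v) i < l * v i)
    (hsum : ∀ i, ∑ j, A i j ≤ l) (i : n) : 0 < v i := by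
  have : Nonempty n := ⟨i⟩
  obtain ⟨k, hk⟩ := Finite.exists_min v
  suffices hpos : 0 < v k from hpos.trans_le (hk i)
  by_contra! hneg
  have hrow : (∑ j, A k j) * v k ≤ (A *ᵥ v) k := by
    rw [Finset.sum_mul]
    refine Finset.sum_le_sum fun j _ => ?_
    rcases eq_or_ne k j with rfl | hkj
    · exact le_rfl
    · exact mul_le_mul_of_nonneg_left (hk j) (hA k j hkj)
  have hscale : l * v k ≤ (∑ j, A k j) * v k := mul_le_mul_of_nonpos_right (hsum k) hneg
  exact ((hscale.trans hrow).trans_lt (hlt k)).false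

end IsMetzler

section SpecAbs

variable {n : Type*} [Fintype n] [DecidableEq n] {A : Matrix n n ℝ} {l : ℝ}

lemma mem_spectrum_map_iff_aeval_charpoly {z : ℂ} :
    z ∈ spectrum ℂ (A.map (algebraMap ℝ ℂ)) ↔ Polynomial.aeval z A.charpoly = 0 := by
  rw [mem_spectrum_iff_isRoot_charpoly, charpoly_map, Polynomial.IsRoot,
    Polynomial.eval_map_algebraMap]

lemma specAbs_eq_of_charpoly_eq {B : Matrix n n ℝ} (h : A.charpoly = B.charpoly) :
    specAbs A = specAbs B := by
  have hspec : spectrum ℂ (A.map (algebraMap ℝ ℂ)) = spectrum ℂ (B.map (algebraMap ℝ ℂ)) := by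
    ext z
    rw [mem_spectrum_map_iff_aeval_charpoly, mem_spectrum_map_iff_aeval_charpoly, h]
  rw [specAbs, specAbs, hspec]

lemma re_le_specAbs {z : ℂ} (hz : z ∈ spectrum ℂ (A.map (algebraMap ℝ ℂ))) : z.re ≤ specAbs A :=
  le_csSup ((finite_spectrum _).image _).bddAbove (Set.mem_image_of_mem _ hz)

lemma mem_resolventSet_of_specAbs_lt (hl : specAbs A < l) : l ∈ resolventSet ℝ A := by
  by_contra hspec
  have hroot : A.charpoly.IsRoot l := mem_spectrum_iff_isRoot_charpoly.1 hspec
  have hmem : (l : ℂ) ∈ spectrum ℂ (A.map (algebraMap ℝ ℂ)) := by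
    rw [mem_spectrum_map_iff_aeval_charpoly, ← Complex.coe_algebraMap,
      Polynomial.aeval_algebraMap_apply, Polynomial.coe_aeval_eq_eval, hroot, map_zero]
  exact (re_le_specAbs hmem).not_gt hl

-- Gershgorin: an eigenvalue lies in a disc centred at some `A k k`, whose rightmost point is the
-- `k`th row sum.
lemma specAbs_le_of_sum_le [Nonempty n] (hA : IsMetzler A) (hsum : ∀ i, ∑ j, A i j ≤ l) :
    specAbs A ≤ l := by
  refine csSup_le ((spectrum.nonempty_of_isAlgClosed_of_finiteDimensional ℂ _).image _) ?_
  rintro _ ⟨z, hz, rfl⟩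
  rw [← spectrum_toLin', ← Module.End.hasEigenvalue_iff_mem_spectrum] at hz
  obtain ⟨k, hk⟩ := eigenvalue_mem_ball hz
  have hradius : ∑ j ∈ Finset.univ.erase k, ‖A.map (algebraMap ℝ ℂ) k j‖ =
      ∑ j ∈ Finset.univ.erase k, A k j := Finset.sum_congr rfl fun j hj => by
    simp [abs_of_nonneg (hA k j (Finset.ne_of_mem_erase hj).symm)]
  rw [mem_closedBall_iff_norm, hradius] at hk
  calc z.re = A k k + (z - A.map (algebraMap ℝ ℂ) k k).re := by simp
    _ ≤ A k k + ∑ j ∈ Finset.univ.erase k, A k j := by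
        gcongr
        exact (Complex.re_le_norm _).trans hk
    _ = ∑ j, A k j := Finset.add_sum_erase _ _ (Finset.mem_univ k)
    _ ≤ l := hsum k

end SpecAbs

section Resolvent

variable {n : Type*} [Fintype n] [DecidableEq n]

lemma mulVec_resolvent_mulVec {R : Type*} [CommRing R] {A : Matrix n n R} {l : R}
    (hl : l ∈ resolventSet R A) (w : n → R) :
    A *ᵥ (resolvent A l *ᵥ w) = l • (resolvent A l *ᵥ w) - w := by
  have hinv : (algebraMap R (Matrix n n R) l - A) *ᵥ (resolvent A l *ᵥ w) = w := by
    rw [mulVec_mulVec, resolvent, Ring.mul_inverse_cancel _ hl, one_mulVec]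
  rw [sub_mulVec, Algebra.algebraMap_eq_smul_one, smul_mulVec, one_mulVec] at hinv
  exact eq_sub_of_add_eq' (sub_eq_iff_eq_add.1 hinv).symm

lemma continuousOn_resolvent {K : Type*} [Field K] [TopologicalSpace K]
    [IsTopologicalDivisionRing K] (A : Matrix n n K) :
    ContinuousOn (resolvent A) (resolventSet K A) := by
  intro l hl
  have hdet : (algebraMap K (Matrix n n K) l - A).det ≠ 0 :=
    ((isUnit_iff_isUnit_det _).1 hl).ne_zero
  have hinv : ContinuousAt Inv.inv (algebraMap K (Matrix n n K) l - A) :=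
    continuousAt_matrix_inv _ (by simpa only [Ring.inverse_eq_inv'] using continuousAt_inv₀ hdet)
  have hsub : Continuous fun r => algebraMap K (Matrix n n K) r - A :=
    (continuous_algebraMap K _).sub continuous_const
  unfold resolvent
  simp only [← nonsing_inv_eq_ringInverse]
  exact (ContinuousAt.comp (f := fun r => algebraMap K (Matrix n n K) r - A) hinv
    hsub.continuousAt).continuousWithinAt

lemma resolvent_mulVec_one_pos {A : Matrix n n ℝ} (hA : IsMetzler A) {l : ℝ}
    (hl : specAbs A < l) (i : n) : 0 < (resolvent A l *ᵥ 1) i := by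
  let v : Set.Ioi (specAbs A) → n → ℝ := fun r => resolvent A r.1 *ᵥ 1
  have hresolvent : Continuous fun r : Set.Ioi (specAbs A) => resolvent A r.1 :=
    ((continuousOn_resolvent A).mono fun _ => mem_resolventSet_of_specAbs_lt).domRestrict
  have hv : Continuous v := hresolvent.matrix_mulVec continuous_const
  have hlt (r) (i) : (A *ᵥ v r) i < r.1 * v r i := by
    simp [v, mulVec_resolvent_mulVec (mem_resolventSet_of_specAbs_lt r.2)]
  have hpos_eq_nonneg : {r | ∀ i, 0 < v r i} = {r | ∀ i, 0 ≤ v r i} :=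
    Set.ext fun r => ⟨fun h i => (h i).le, hA.pos_of_nonneg_of_mulVec_lt (hlt r)⟩
  have hclopen : IsClopen {r | ∀ i, 0 < v r i} := by
    constructor
    · rw [hpos_eq_nonneg, Set.ofPred_forall]
      exact isClosed_iInter fun i => isClosed_le continuous_const (by fun_prop)
    · rw [Set.ofPred_forall]
      exact isOpen_iInter_of_finite fun i => isOpen_lt continuous_const (by fun_prop)
  have hnonempty : {r | ∀ i, 0 < v r i}.Nonempty := by
    obtain ⟨r, hr, hsum⟩ := ((Filter.eventually_gt_atTop (specAbs A)).and
      (Filter.eventually_all.2 fun i => Filter.eventually_ge_atTop (∑ j, A i j))).exists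
    exact ⟨⟨r, hr⟩, hA.pos_of_sum_le_of_mulVec_lt (hlt _) hsum⟩
  have : PreconnectedSpace (Set.Ioi (specAbs A)) :=
    Subtype.preconnectedSpace isPreconnected_Ioi
  have hall : (⟨l, hl⟩ : Set.Ioi (specAbs A)) ∈ {r | ∀ i, 0 < v r i} :=
    hclopen.eq_univ hnonempty ▸ Set.mem_univ _
  exact hall i

end Resolvent

section ExpConj

variable {n : Type*} [Fintype n] [DecidableEq n]

/-- The conjugate of `A` by the positive diagonal matrix `diagonal (exp x)`. Parametrizing positive
diagonal matrices by their logarithms is what makes row sums of conjugates convex in `x`. -/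
noncomputable def expConj (A : Matrix n n ℝ) (x : n → ℝ) : Matrix n n ℝ :=
  diagonal (fun i => Real.exp (-x i)) * A * diagonal fun i => Real.exp (x i)

lemma expConj_apply (A : Matrix n n ℝ) (x : n → ℝ) (i j : n) :
    expConj A x i j = A i j * Real.exp (x j - x i) := by
  rw [expConj, mul_diagonal, diagonal_mul, sub_eq_neg_add, Real.exp_add]
  ring

lemma IsMetzler.expConj {A : Matrix n n ℝ} (hA : IsMetzler A) (x : n → ℝ) :
    IsMetzler (expConj A x) := fun i j hij => by
  rw [expConj_apply]
  exact mul_nonneg (hA i j hij) (Real.exp_pos _).le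

lemma specAbs_expConj (A : Matrix n n ℝ) (x : n → ℝ) : specAbs (expConj A x) = specAbs A := by
  refine specAbs_eq_of_charpoly_eq ?_
  rw [expConj, charpoly_mul_comm, ← mul_assoc, diagonal_mul_diagonal]
  simp [← Real.exp_add]

lemma exists_sum_expConj_le {A : Matrix n n ℝ} (hA : IsMetzler A) {l : ℝ} (hl : specAbs A < l) :
    ∃ x, ∀ i, ∑ j, expConj A x i j ≤ l := by
  set v := resolvent A l *ᵥ 1 with hv
  have hpos : ∀ i, 0 < v i := resolvent_mulVec_one_pos hA hl
  refine ⟨fun i => Real.log (v i), fun i => ?_⟩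
  calc ∑ j, expConj A (fun i => Real.log (v i)) i j
      = (A *ᵥ v) i / v i := by
        simp only [expConj_apply, Real.exp_sub, Real.exp_log (hpos _), ← mul_div_assoc,
          ← Finset.sum_div, mulVec, dotProduct]
    _ ≤ l := by
        rw [div_le_iff₀ (hpos i), hv, mulVec_resolvent_mulVec (mem_resolventSet_of_specAbs_lt hl)]
        simp

variable {E : Type*} [AddCommMonoid E] [Module ℝ E] {C : Set E} {A : E → Matrix n n ℝ}

lemma convexOn_sum_expConj (hdiag : ∀ i, ConvexOn ℝ C fun s => A s i i)
    (hoff : ∀ i j, i ≠ j → LogConvexOrZeroOn C fun s => A s i j) (i : n) :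
    ConvexOn ℝ (Prod.fst ⁻¹' C) fun p : E × (n → ℝ) => ∑ j, expConj (A p.1) p.2 i j := by
  have hC : Convex ℝ (Prod.fst ⁻¹' C : Set (E × (n → ℝ))) :=
    (hdiag i).1.linear_preimage (LinearMap.fst ℝ E (n → ℝ))
  refine convexOn_finsetSum hC fun j _ => ?_
  simp only [expConj_apply]
  rcases eq_or_ne i j with rfl | hij
  · simp only [sub_self, Real.exp_zero, mul_one]
    exact (hdiag i).comp_linearMap (LinearMap.fst ℝ E (n → ℝ))
  · let difference : E × (n → ℝ) →ₗ[ℝ] ℝ :=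
      (LinearMap.proj (R := ℝ) (φ := fun _ => ℝ) j - LinearMap.proj i) ∘ₗ
        LinearMap.snd ℝ E (n → ℝ)
    exact (((hoff i j hij).comp_linearMap (LinearMap.fst ℝ E (n → ℝ))).mul_exp
      (difference.convexOn hC)).convexOn hC

theorem nussbaum_convexity_general (hC : Convex ℝ C)
    (hdiag : ∀ i, ConvexOn ℝ C fun s => A s i i)
    (hoff : ∀ i j, i ≠ j → LogConvexOrZeroOn C fun s => A s i j) :
    ConvexOn ℝ C fun s => specAbs (A s) := by
  rcases isEmpty_or_nonempty n with hn | hn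
  -- `specAbs` of the empty matrix is `sSup ∅ = 0`.
  · simpa [specAbs, spectrum.of_subsingleton] using convexOn_const (0 : ℝ) hC
  have hA (s) (hs : s ∈ C) : IsMetzler (A s) := fun i j hij => (hoff i j hij).nonneg hs
  refine convexOn_of_partial_minimization hC (convexOn_sum_expConj hdiag hoff)
    (fun s hs x l hsum => ?_) fun s hs l hl => exists_sum_expConj_le (hA s hs) hl
  rw [← specAbs_expConj (A s) x]
  exact specAbs_le_of_sum_le ((hA s hs).expConj x) hsum

end ExpConj

/-- **Nussbaum convexity.**  Let `C ⊆ ℝ` be nonempty and convex, `F s` entrywise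
nonnegative with each entry either log-convex (in particular nowhere zero) or
identically zero on `C`, and `G s` diagonal with convex diagonal entries.  Then
`s ↦ ζ(F(s) + G(s))` is convex on `C`. -/
theorem nussbaum_convexity {N : ℕ} (C : Set ℝ) (hC : C.Nonempty) (hconv : Convex ℝ C)
    (F G : ℝ → Matrix (Fin N) (Fin N) ℝ)
    (hFnonneg : ∀ s ∈ C, ∀ i j, 0 ≤ F s i j)
    (hFentries : ∀ i j,
      ((∀ s ∈ C, 0 < F s i j) ∧ ConvexOn ℝ C (fun s => Real.log (F s i j))) ∨
      (∀ s ∈ C, F s i j = 0))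
    (hGdiag : ∀ s ∈ C, ∀ i j, i ≠ j → G s i j = 0)
    (hGconv : ∀ i, ConvexOn ℝ C (fun s => G s i i)) :
    ConvexOn ℝ C (fun s => specAbs (F s + G s)) := by
  have hF (i j) : LogConvexOrZeroOn C fun s => F s i j := hFentries i j
  exact nussbaum_convexity_general hconv (fun i => ((hF i i).convexOn hconv).add (hGconv i))
    fun i j hij => (hF i j).congr fun s hs => by simp [hGdiag s hs i j hij]
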